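/- arXiv:2603.17276 — 2 statements merged into one kernel-verified Lean document; each statement's English description precedes it below -/
import Mathlib

section
/- Let A = (A,·,∘) be a finite skew brace with |A| ≥ 3 such that both groups (A,·) and (A,∘) are nilpotent. Then Aut(A) is non-trivial, i.e., there exists a bijection f : A → A with f ≠ id that is an automorphism of both (A,·) and (A,∘). -/
/-- A skew brace structure on a group `A` (whose given group operation `*` plays the
role of the "additive" operation `·`): a second group operation `circ` with the same
identity element `1`, satisfying the brace relation
`a ∘ (b · c) = (a ∘ b) · a⁻¹ · (a ∘ c)`. -/
structure SkewBraceStruct (A : Type*) [Group A] where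
  circ : A → A → A
  circInv : A → A
  circ_assoc : ∀ a b c, circ (circ a b) c = circ a (circ b c)
  one_circ : ∀ a, circ 1 a = a
  circ_one : ∀ a, circ a 1 = a
  circInv_circ : ∀ a, circ (circInv a) a = 1
  brace : ∀ a b c, circ a (b * c) = circ a b * a⁻¹ * circ a c

/-- `f` is an automorphism of the skew brace: a bijection that is an automorphism of
both `(A, ·)` and `(A, ∘)`. -/
def SkewBraceStruct.IsAut {A : Type*} [Group A] (S : SkewBraceStruct A) (f : A → A) : Prop :=
  Function.Bijective f ∧ (∀ a b, f (a * b) = f a * f b) ∧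
    (∀ a b, f (S.circ a b) = S.circ (f a) (f b))


/-- The multiplicative group `(A, ∘)` of a skew brace. -/
abbrev SkewBraceStruct.circGroup {A : Type*} [Group A] (S : SkewBraceStruct A) : Group A :=
  @Group.ofLeftAxioms A ⟨S.circ⟩ ⟨S.circInv⟩ ⟨1⟩ S.circ_assoc S.one_circ S.circInv_circ


namespace SkewBraceStruct

variable {A : Type*} [Group A] (S : SkewBraceStruct A)

/-- The carrier with the group structure `∘`. -/
def Circ (_S : SkewBraceStruct A) : Type _ := A

instance : Group S.Circ := S.circGroup

instance [h : Finite A] : Finite S.Circ := h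

/-- The lambda map. -/
def lam (a b : A) : A := a⁻¹ * S.circ a b

lemma circ_eq (a b : A) : S.circ a b = a * S.lam a b := by simp [lam]

lemma lam_mul (a b c : A) : S.lam a (b * c) = S.lam a b * S.lam a c := by
  simp [lam, S.brace, mul_assoc]

lemma lam_one_right (a : A) : S.lam a 1 = 1 := by simp [lam, S.circ_one]

lemma lam_one (b : A) : S.lam 1 b = b := by simp [lam, S.one_circ]

lemma lam_circ (a b c : A) : S.lam (S.circ a b) c = S.lam a (S.lam b c) := by
  have h := S.circ_assoc a b c
  rw [S.circ_eq (S.circ a b) c, S.circ_eq a (S.circ b c), S.circ_eq b c, S.lam_mul, S.circ_eq a b,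
    mul_assoc, mul_right_inj, mul_right_inj, ← S.circ_eq a b] at h
  exact h

lemma circ_circInv (a : A) : S.circ a (S.circInv a) = 1 :=
  mul_inv_cancel (G := S.Circ) a

/-- The lambda map as a homomorphism. -/
def lamHom : S.Circ →* MulAut A where
  toFun a :=
    { toFun := S.lam a
      invFun := S.lam (S.circInv a)
      left_inv := fun x => (S.lam_circ _ _ x).symm.trans (by
        rw [show S.circ (S.circInv a) a = 1 from S.circInv_circ a, lam_one])
      right_inv := fun x => (S.lam_circ _ _ x).symm.trans (by
        rw [show S.circ a (S.circInv a) = 1 from S.circ_circInv a, lam_one])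
      map_mul' := S.lam_mul a }
  map_one' := by ext x; exact S.lam_one x
  map_mul' a b := by ext x; exact S.lam_circ a b x

lemma lamHom_apply (a : S.Circ) (b : A) : S.lamHom a b = S.lam a b := rfl

lemma lam_inj (a : A) : Function.Injective (S.lam a) := (S.lamHom a).injective

lemma lam_inv (a b : A) : S.lam a b⁻¹ = (S.lam a b)⁻¹ := map_inv (S.lamHom a) b

lemma lam_pow (a b : A) (n : ℕ) : S.lam a (b ^ n) = (S.lam a b) ^ n := map_pow (S.lamHom a) b n

/-- Central elements fixed by lambda. -/
def fixCenter : Subgroup A where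
  carrier := {z | (∀ a, a * z = z * a) ∧ ∀ a, S.lam a z = z}
  one_mem' := by simp [lam_one_right]
  mul_mem' := by
    rintro x y ⟨hx, hx'⟩ ⟨hy, hy'⟩
    exact ⟨fun a => by rw [← mul_assoc, hx, mul_assoc, hy, mul_assoc],
      fun a => by rw [lam_mul, hx', hy']⟩
  inv_mem' := by
    rintro x ⟨hx, hx'⟩
    exact ⟨fun a => ((show Commute a x from hx a).inv_right).eq, fun a => by rw [lam_inv, hx']⟩

/-- The annihilator. -/
def ann : Subgroup A where
  carrier := {z | z ∈ S.fixCenter ∧ ∀ a, S.lam z a = a}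
  one_mem' := ⟨one_mem _, S.lam_one⟩
  mul_mem' := by
    rintro x y ⟨hx, hx'⟩ ⟨hy, hy'⟩
    refine ⟨mul_mem hx hy, fun a => ?_⟩
    have : x * y = S.circ x y := by rw [circ_eq, hx']
    rw [this, lam_circ, hy', hx']
  inv_mem' := by
    rintro x ⟨hx, hx'⟩
    refine ⟨inv_mem hx, fun a => ?_⟩
    apply S.lam_inj x
    have : S.circ x x⁻¹ = 1 := by rw [circ_eq, hx']; simp
    rw [← lam_circ, this, lam_one, hx']

lemma isAut_lam {z : A} (hz : z ∈ S.fixCenter) : S.IsAut (S.lam z) := by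
  refine ⟨(S.lamHom z).bijective, S.lam_mul z, fun a b => ?_⟩
  have key : S.circ z a = S.circ (S.lam z a) z := by
    rw [circ_eq, circ_eq, hz.2, hz.1]
  rw [circ_eq, lam_mul, circ_eq S (S.lam z a), ← lam_circ, key, lam_circ]

lemma isAut_mul [Finite A] (ψ : A →* A) (h1 : ∀ a, ψ a ∈ S.ann) (h2 : ∀ a b, ψ (S.lam a b) = ψ b)
    (h3 : ∀ a, ψ (ψ a) = 1) : S.IsAut (fun a => a * ψ a) := by
  let F : A →* A :=
    { toFun := fun a => a * ψ a
      map_one' := by simp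
      map_mul' := fun a b => by
        rw [map_mul, mul_assoc, mul_assoc, ← mul_assoc b, (h1 a).1.1 b, mul_assoc] }
  have hinj : Function.Injective F := by
    rw [injective_iff_map_eq_one]
    intro a ha
    have ha : a * ψ a = 1 := ha
    have h := congrArg ψ ha
    rw [map_mul, h3, mul_one, map_one] at h
    simpa [h] using ha
  refine ⟨Finite.injective_iff_bijective.mp hinj, F.map_mul, fun a b => ?_⟩
  have e : a * ψ a = S.circ a (ψ a) := by rw [circ_eq, (h1 a).1.2]
  have e2 : S.lam (a * ψ a) (b * ψ b) = S.lam a b * ψ b := by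
    rw [e, lam_circ, (h1 a).2, lam_mul, (h1 b).1.2]
  show S.circ a b * ψ (S.circ a b) = S.circ (a * ψ a) (b * ψ b)
  rw [circ_eq, circ_eq S (a * ψ a), e2, map_mul, h2, mul_assoc, mul_assoc, ← mul_assoc (S.lam a b),
    (h1 a).1.1, mul_assoc]

end SkewBraceStruct

lemma skb_fixed_pt {p : ℕ} [Fact p.Prime] {G X : Type*} [Group G] [MulAction G X]
    (hG : IsPGroup p G) (H : Set X) [Finite H] (hinv : ∀ g : G, ∀ x ∈ H, g • x ∈ H)
    (hp : p ∣ Nat.card H) (a : X) (ha : a ∈ H) (hfix : ∀ g : G, g • a = a) :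
    ∃ b ∈ H, b ≠ a ∧ ∀ g : G, g • b = b := by
  letI : MulAction G H :=
    { smul := fun g x => ⟨g • x.1, hinv g x.1 x.2⟩
      one_smul := fun x => Subtype.ext (one_smul G x.1)
      mul_smul := fun g h x => Subtype.ext (mul_smul g h x.1) }
  obtain ⟨b, hb, hne⟩ := hG.exists_fixed_point_of_prime_dvd_card_of_fixed_point H hp
    (a := ⟨a, ha⟩) (fun g => Subtype.ext (hfix g))
  exact ⟨b.1, b.2, fun h => hne (Subtype.ext h.symm), fun g => congrArg Subtype.val (hb g)⟩

lemma skb_exists_hom {p : ℕ} [hp : Fact p.Prime] {B : Type*} [Group B] [Finite B] [Nontrivial B]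
    (hB : IsPGroup p B) : ∃ χ : B →* Multiplicative (ZMod p), χ ≠ 1 := by
  obtain ⟨n, hn, hcard⟩ := hB.nontrivial_iff_card.mp inferInstance
  obtain ⟨m, rfl⟩ : ∃ m, n = m + 1 := ⟨n - 1, by omega⟩
  obtain ⟨K, hK⟩ := Sylow.exists_subgroup_card_pow_prime (G := B) p (n := m)
    (by rw [hcard]; exact pow_dvd_pow _ (by omega))
  have hidx : K.index = p := by
    have h := K.card_mul_index
    rw [hK, hcard, pow_succ] at h
    exact Nat.eq_of_mul_eq_mul_left (pow_pos hp.out.pos _) h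
  have : K.Normal := by
    apply Subgroup.normal_of_index_eq_minFac_card
    rw [hidx, hcard, Nat.Prime.pow_minFac hp.out (by omega)]
  let e : B ⧸ K ≃* Multiplicative (ZMod p) := mulEquivOfPrimeCardEq (p := p)
    (by rw [← hidx]; rfl) (by simp)
  refine ⟨e.toMonoidHom.comp (QuotientGroup.mk' K), fun h => ?_⟩
  have hK1 : K = ⊤ := by
    rw [eq_top_iff]
    intro x _
    have := DFunLike.congr_fun h x
    simpa using this
  rw [hK1, Subgroup.index_top] at hidx
  exact hp.out.one_lt.ne hidx

namespace SkewBraceStruct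

variable {A : Type*} [Group A] (S : SkewBraceStruct A)

lemma exists_fixCenter [Finite A] [Nontrivial A] {p : ℕ} [hp : Fact p.Prime] (hA : IsPGroup p A)
    (hC : IsPGroup p S.Circ) : ∃ z ∈ S.fixCenter, orderOf z = p := by
  letI : MulAction S.Circ A := MulAction.compHom A S.lamHom
  have hsm : ∀ (g : S.Circ) (x : A), g • x = S.lam g x := fun g x => rfl
  have := hA.center_nontrivial
  obtain ⟨b, hb, hb1, hfix⟩ := skb_fixed_pt hC (Subgroup.center A : Set A)
    (by
      intro g x hx
      have := (Subgroup.characteristic_iff_map_eq.mp (inferInstance :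
        (Subgroup.center A).Characteristic) (S.lamHom g))
      show S.lamHom g x ∈ Subgroup.center A
      rw [← this]
      exact ⟨x, hx, rfl⟩)
    (((hA.to_subgroup (Subgroup.center A)).card_eq_or_dvd).resolve_left
      (Finite.one_lt_card (α := Subgroup.center A)).ne')
    1 (one_mem _) (fun g => S.lam_one_right g)
  have hbm : b ∈ S.fixCenter := ⟨fun a => Subgroup.mem_center_iff.mp hb a, hfix⟩
  have hd := hA.dvd_orderOf hb1
  refine ⟨b ^ (orderOf b / p), pow_mem hbm _, orderOf_pow_orderOf_div (orderOf_pos b).ne' hd⟩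

lemma exists_chi [Finite A] {p : ℕ} [hp : Fact p.Prime] (hA : IsPGroup p A)
    (hC : IsPGroup p S.Circ) (z : A) (hz : z ∈ S.fixCenter) (hzp : orderOf z = p)
    (hcard : Nat.card A ≠ p) :
    ∃ χ : A →* Multiplicative (ZMod p), χ ≠ 1 ∧ χ z = 1 ∧ ∀ a b, χ (S.lam a b) = χ b := by
  letI : MulAction S.Circ (A →* Multiplicative (ZMod p)) :=
    { smul := fun g χ => χ.comp (S.lamHom g⁻¹).toMonoidHom
      one_smul := fun χ => by
        ext x
        show χ (S.lamHom 1⁻¹ x) = χ x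
        simp
      mul_smul := fun g h χ => by
        ext x
        show χ (S.lamHom (g * h)⁻¹ x) = χ (S.lamHom h⁻¹ (S.lamHom g⁻¹ x))
        simp }
  have hsm : ∀ (g : S.Circ) (χ : A →* Multiplicative (ZMod p)) (x : A),
    (g • χ) x = χ (S.lamHom g⁻¹ x) := fun g χ x => rfl
  haveI : Finite (A →* Multiplicative (ZMod p)) := Finite.of_injective _ DFunLike.coe_injective
  let H : Subgroup (A →* Multiplicative (ZMod p)) :=
    { carrier := {χ | χ z = 1}
      one_mem' := rfl
      mul_mem' := fun {x y} hx hy => by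
        simp only [Set.mem_ofPred_eq] at *
        simp [hx, hy]
      inv_mem' := fun {x} hx => by
        simp only [Set.mem_ofPred_eq] at *
        simp [hx] }
  have hH : ∀ χ, χ ∈ H ↔ χ z = 1 := fun χ => Iff.rfl
  have hHp : IsPGroup p H := by
    intro χ
    refine ⟨1, Subtype.ext (MonoidHom.ext fun x => ?_)⟩
    have : ((χ.1 x) ^ p) = 1 := by
      have := pow_card_eq_one' (x := χ.1 x)
      simpa using this
    simpa using this
  have hnt : Nat.card H ≠ 1 := by
    intro h1
    let Z := Subgroup.zpowers z
    haveI : Z.Normal := by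
      refine ⟨fun n hn g => ?_⟩
      have hn' : n ∈ S.fixCenter := (Subgroup.zpowers_le.mpr hz) hn
      rw [hn'.1 g]; simpa using hn
    have hZc : Nat.card Z = p := by rw [Nat.card_zpowers, hzp]
    haveI : Nontrivial (A ⧸ Z) := by
      apply QuotientGroup.nontrivial_iff.mpr
      intro h
      apply hcard
      rw [← hZc, h]
      simp
    obtain ⟨χ, hχ⟩ := skb_exists_hom (hA.to_quotient Z)
    have hm : χ.comp (QuotientGroup.mk' Z) ∈ H := by
      rw [hH]
      have : (z : A ⧸ Z) = 1 := (QuotientGroup.eq_one_iff z).mpr (Subgroup.mem_zpowers z)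
      simp [this]
    have hsub : Subsingleton H := (Nat.card_eq_one_iff_unique.mp h1).1
    have h2 := congrArg Subtype.val (hsub.elim ⟨_, hm⟩ 1)
    apply hχ
    ext x
    have := DFunLike.congr_fun h2 x
    simpa using this
  obtain ⟨χ, hχ, hne, hfix⟩ := skb_fixed_pt hC (H : Set (A →* Multiplicative (ZMod p)))
    (by
      intro g χ hχ
      show (g • χ) z = 1
      rw [hsm, lamHom_apply]
      refine (congrArg χ (hz.2 _)).trans ?_
      exact hχ)
    (hHp.card_eq_or_dvd.resolve_left hnt) 1 (one_mem H)
    (fun g => by ext x; rw [hsm]; simp)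
  refine ⟨χ, hne, hχ, fun a b => ?_⟩
  let g : S.Circ := a
  have := DFunLike.congr_fun (hfix g⁻¹) b
  rw [hsm, inv_inv] at this
  exact this

theorem pgroup_case [Finite A] {p : ℕ} [hp : Fact p.Prime] (hA : IsPGroup p A)
    (hcard : 3 ≤ Nat.card A) : ∃ f : A → A, S.IsAut f ∧ f ≠ id := by
  have hC : IsPGroup p S.Circ := by
    obtain ⟨n, hn⟩ := IsPGroup.iff_card.mp hA
    exact IsPGroup.of_card (n := n) hn
  haveI : Nontrivial A := Finite.one_lt_card_iff_nontrivial.mp (by omega)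
  obtain ⟨z, hz, hzp⟩ := S.exists_fixCenter hA hC
  by_cases hl : S.lam z = id
  swap
  · exact ⟨_, S.isAut_lam hz, hl⟩
  have hza : z ∈ S.ann := ⟨hz, fun a => congrFun hl a⟩
  have hZle : Subgroup.zpowers z ≤ S.ann := Subgroup.zpowers_le.mpr hza
  have hZc : Nat.card (Subgroup.zpowers z) = p := by rw [Nat.card_zpowers, hzp]
  by_cases hAp : Nat.card A = p
  · have htop : Subgroup.zpowers z = ⊤ := Subgroup.eq_top_of_card_eq _ (by rw [hZc, hAp])
    have hall : ∀ a, a ∈ S.ann := fun a => hZle (htop ▸ Subgroup.mem_top a)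
    have hm : ∀ a b : A, (a * b)⁻¹ = a⁻¹ * b⁻¹ := fun a b => by
      rw [(hall b).1.1 a, mul_inv_rev]
    refine ⟨fun a => a⁻¹, ⟨inv_involutive.bijective, hm, fun a b => ?_⟩, fun h => ?_⟩
    · rw [circ_eq, circ_eq, (hall a).2, (hall _).2]
      exact hm a b
    · have h1 : z⁻¹ = z := congrFun h z
      have h2 : z ^ 2 = 1 := by rw [pow_two]; nth_rewrite 1 [← h1]; simp
      have h3 := Nat.le_of_dvd (by norm_num) (orderOf_dvd_of_pow_eq_one h2)
      omega
  · obtain ⟨χ, hχ, hχz, hχl⟩ := S.exists_chi hA hC z hz hzp hAp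
    let e : Multiplicative (ZMod p) ≃* Subgroup.zpowers z :=
      mulEquivOfPrimeCardEq (p := p) (by simp) hZc
    let ψ : A →* A := (Subgroup.zpowers z).subtype.comp (e.toMonoidHom.comp χ)
    have hψ : ∀ a, ψ a = (e (χ a) : A) := fun a => rfl
    have hψZ : ∀ a, ψ a ∈ Subgroup.zpowers z := fun a => (e (χ a)).2
    refine ⟨_, S.isAut_mul ψ (fun a => hZle (hψZ a)) (fun a b => by rw [hψ, hψ, hχl])
      (fun a => ?_), fun h => hχ ?_⟩
    · obtain ⟨k, hk⟩ := Subgroup.mem_zpowers_iff.mp (hψZ a)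
      rw [← hk, hψ, map_zpow, hχz]
      simp
    · ext x
      have h1 : x * ψ x = x := congrFun h x
      have h2 : ψ x = 1 := by simpa using h1
      rw [hψ] at h2
      have h3 : e (χ x) = 1 := Subtype.ext h2
      have h4 : χ x = 1 := by simpa using h3
      rw [h4]; rfl

end SkewBraceStruct

lemma skb_pow_mul {G : Type*} [Group G] [Finite G] (hn : Group.IsNilpotent G) {p k m e : ℕ}
    [hp : Fact p.Prime] (hc : Nat.card G = p ^ k * m) (hcop : p.Coprime m)
    (he1 : e ≡ 1 [MOD p ^ k]) (he0 : m ∣ e) (a b : G) : (a * b) ^ e = a ^ e * b ^ e := by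
  obtain ⟨φ⟩ := ((Group.isNilpotent_of_finite_tfae (G := G)).out 0 4).mp hn
  apply φ.symm.injective
  simp only [map_pow, map_mul]
  generalize φ.symm a = x
  generalize φ.symm b = y
  funext q Q
  simp only [Pi.mul_apply, Pi.pow_apply]
  haveI : Fact (q : ℕ).Prime := ⟨Nat.prime_of_mem_primeFactors q.2⟩
  have hdvd : Nat.card Q ∣ p ^ k * m := hc ▸ Subgroup.card_subgroup_dvd_card (Q : Subgroup G)
  obtain ⟨j, hj⟩ := IsPGroup.iff_card.mp Q.isPGroup'
  by_cases hq : (q : ℕ) = p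
  · have h1 : Nat.card Q ∣ p ^ k := by
      refine Nat.Coprime.dvd_of_dvd_mul_right ?_ hdvd
      rw [hj, hq]
      exact Nat.Coprime.pow_left _ hcop
    have h2 : ∀ w : Q, w ^ e = w := fun w => by
      conv_rhs => rw [← pow_one w]
      exact pow_eq_pow_iff_modEq.mpr (he1.of_dvd ((orderOf_dvd_natCard w).trans h1))
    rw [h2, h2, h2]
  · have h1 : Nat.card Q ∣ m := by
      refine Nat.Coprime.dvd_of_dvd_mul_left ?_ hdvd
      rw [hj]
      exact Nat.Coprime.pow _ _ ((Nat.coprime_primes this.out hp.out).mpr hq)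
    have h2 : ∀ w : Q, w ^ e = 1 := fun w =>
      orderOf_dvd_iff_pow_eq_one.mp ((orderOf_dvd_natCard w).trans (h1.trans he0))
    rw [h2, h2, h2, one_mul]

lemma skb_comm {G : Type*} [Group G] {e : ℕ} (h : ∀ a b : G, (a * b) ^ e = a ^ e * b ^ e)
    {x y : G} (hx : x ^ e = x) (hy : y ^ e = 1) : x * y = y * x := by
  have h1 : (x * y * x⁻¹) ^ e = 1 := by rw [conj_pow, hy]; simp
  have h2 : (y * x⁻¹ * y⁻¹) ^ e = y * x⁻¹ * y⁻¹ := by rw [conj_pow, inv_pow, hx]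
  have h3 : x * (y * x⁻¹ * y⁻¹) = 1 := by
    have h4 : (x * (y * x⁻¹ * y⁻¹)) ^ e = x * (y * x⁻¹ * y⁻¹) := by rw [h, hx, h2]
    rw [← h4, show x * (y * x⁻¹ * y⁻¹) = (x * y * x⁻¹) * y⁻¹ by group, h, h1, inv_pow, hy]
    simp
  calc x * y = x * (y * x⁻¹ * y⁻¹) * (y * x) := by group
    _ = y * x := by rw [h3, one_mul]

lemma skb_glue {G : Type*} [Group G] {e : ℕ} (h : ∀ a b : G, (a * b) ^ e = a ^ e * b ^ e)
    (hid : ∀ a : G, (a ^ e) ^ e = a ^ e) (f : G → G) (hf : ∀ a, a ^ e = a → (f a) ^ e = f a)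
    (hfm : ∀ a b, a ^ e = a → b ^ e = b → f (a * b) = f a * f b) (a b : G) :
    f ((a * b) ^ e) * (((a * b) ^ e)⁻¹ * (a * b)) =
      f (a ^ e) * ((a ^ e)⁻¹ * a) * (f (b ^ e) * ((b ^ e)⁻¹ * b)) := by
  have hq : ((a ^ e)⁻¹ * a) ^ e = 1 := by rw [h, inv_pow, hid]; simp
  have c1 := skb_comm h (hf _ (hid b)) hq
  have c2 := skb_comm h (hid b) hq
  have c3 : (b ^ e)⁻¹ * ((a ^ e)⁻¹ * a) = ((a ^ e)⁻¹ * a) * (b ^ e)⁻¹ :=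
    ((show Commute (b ^ e) ((a ^ e)⁻¹ * a) from c2).inv_left).eq
  rw [h, hfm _ _ (hid a) (hid b), mul_inv_rev]
  calc f (a ^ e) * f (b ^ e) * ((b ^ e)⁻¹ * (a ^ e)⁻¹ * (a * b))
      = f (a ^ e) * f (b ^ e) * ((b ^ e)⁻¹ * ((a ^ e)⁻¹ * a)) * b := by group
    _ = f (a ^ e) * (f (b ^ e) * ((a ^ e)⁻¹ * a)) * (b ^ e)⁻¹ * b := by rw [c3]; group
    _ = _ := by rw [c1]; group

namespace SkewBraceStruct

variable {A : Type*} [Group A] (S : SkewBraceStruct A)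

lemma circInv_eq (a : A) : S.circInv a = (S.lam (S.circInv a) a)⁻¹ := by
  have h := S.circInv_circ a
  rw [circ_eq] at h
  exact eq_inv_of_mul_eq_one_left h

/-- View an element in the circle group. -/
def toC (a : A) : S.Circ := a

/-- The sub skew brace on a left ideal. -/
def sub (H : Subgroup A) (hH : ∀ a, ∀ b ∈ H, S.lam a b ∈ H) : SkewBraceStruct H where
  circ a b := ⟨S.circ a b, by rw [circ_eq]; exact mul_mem a.2 (hH _ _ b.2)⟩
  circInv a := ⟨S.circInv a, by rw [circInv_eq]; exact inv_mem (hH _ _ a.2)⟩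
  circ_assoc a b c := Subtype.ext (S.circ_assoc _ _ _)
  one_circ a := Subtype.ext (S.one_circ _)
  circ_one a := Subtype.ext (S.circ_one _)
  circInv_circ a := Subtype.ext (S.circInv_circ _)
  brace a b c := Subtype.ext (S.brace _ _ _)

lemma orderOf_circ_dvd [Finite A] (H : Subgroup A) (hH : ∀ a, ∀ b ∈ H, S.lam a b ∈ H) (a : A)
    (ha : a ∈ H) : orderOf (S.toC a) ∣ Nat.card H := by
  let K : Subgroup S.Circ :=
    { carrier := {x | (show A from x) ∈ H}
      one_mem' := one_mem H
      mul_mem' := fun {x y} hx hy => by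
        refine (congrArg (· ∈ H) (S.circ_eq x y)).mpr ?_
        exact mul_mem hx (hH _ _ hy)
      inv_mem' := fun {x} hx => by
        refine (congrArg (· ∈ H) (S.circInv_eq x)).mpr ?_
        exact inv_mem (hH _ _ hx) }
  have : Nat.card K = Nat.card H := rfl
  rw [← this]
  exact Subgroup.orderOf_dvd_natCard K (x := (S.toC a)) ha

theorem reduce [Finite A] (hn : Group.IsNilpotent A) (hn' : Group.IsNilpotent S.Circ) {p : ℕ}
    [hp : Fact p.Prime] (hpd : p ∣ Nat.card A) (hp3 : 3 ≤ p) :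
    ∃ f : A → A, S.IsAut f ∧ f ≠ id := by
  obtain ⟨k, m, hndvd, hc⟩ :=
    Nat.exists_eq_pow_mul_and_not_dvd (Nat.card_pos (α := A)).ne' p hp.out.ne_one
  have hcop : p.Coprime m := (Nat.Prime.coprime_iff_not_dvd hp.out).mpr hndvd
  have hk : k ≠ 0 := by
    rintro rfl
    rw [pow_zero, one_mul] at hc
    exact hndvd (hc ▸ hpd)
  obtain ⟨e, he1, he0'⟩ := Nat.chineseRemainder (Nat.Coprime.pow_left k hcop) 1 0
  have he0 : m ∣ e := (Nat.modEq_zero_iff_dvd).mp he0'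
  have hc' : Nat.card S.Circ = p ^ k * m := hc
  have hpow := skb_pow_mul hn hc hcop he1 he0
  have hpow' := skb_pow_mul hn' hc' hcop he1 he0
  have hee : e * e ≡ e [MOD p ^ k * m] := by
    refine (Nat.modEq_and_modEq_iff_modEq_mul (Nat.Coprime.pow_left k hcop)).mp ⟨?_, ?_⟩
    · simpa using he1.mul_right e
    · exact ((Nat.modEq_zero_iff_dvd).mpr (he0.mul_right e)).trans he0'.symm
  have hid : ∀ a : A, (a ^ e) ^ e = a ^ e := fun a => by
    rw [← pow_mul]
    exact pow_eq_pow_iff_modEq.mpr (hee.of_dvd (hc ▸ orderOf_dvd_natCard a))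
  have hid' : ∀ a : S.Circ, (a ^ e) ^ e = a ^ e := fun a => by
    rw [← pow_mul]
    exact pow_eq_pow_iff_modEq.mpr (hee.of_dvd (hc' ▸ orderOf_dvd_natCard a))
  let P : Subgroup A :=
    { carrier := {a | a ^ e = a}
      one_mem' := one_pow e
      mul_mem' := fun {x y} hx hy => by
        show (x * y) ^ e = x * y
        rw [hpow, show x ^ e = x from hx, show y ^ e = y from hy]
      inv_mem' := fun {x} hx => by
        show (x⁻¹) ^ e = x⁻¹
        rw [inv_pow, show x ^ e = x from hx] }
  let Q : Subgroup A :=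
    { carrier := {a | a ^ e = 1}
      one_mem' := one_pow e
      mul_mem' := fun {x y} hx hy => by
        show (x * y) ^ e = 1
        rw [hpow, show x ^ e = 1 from hx, show y ^ e = 1 from hy, one_mul]
      inv_mem' := fun {x} hx => by
        show (x⁻¹) ^ e = 1
        rw [inv_pow, show x ^ e = 1 from hx, inv_one] }
  have hPm : ∀ a, a ∈ P ↔ a ^ e = a := fun a => Iff.rfl
  have hQm : ∀ a, a ∈ Q ↔ a ^ e = 1 := fun a => Iff.rfl
  have hPl : ∀ a, ∀ b ∈ P, S.lam a b ∈ P := fun a b hb => by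
    rw [hPm, ← lam_pow, (hPm b).mp hb]
  have hQl : ∀ a, ∀ b ∈ Q, S.lam a b ∈ Q := fun a b hb => by
    rw [hQm, ← lam_pow, (hQm b).mp hb, lam_one_right]
  have hPp : IsPGroup p P := by
    rintro ⟨x, hx⟩
    refine ⟨k, Subtype.ext ?_⟩
    show x ^ p ^ k = 1
    rw [← (hPm x).mp hx, ← pow_mul]
    obtain ⟨t, rfl⟩ := he0
    rw [show m * t * p ^ k = (p ^ k * m) * t by ring, ← hc, pow_mul, pow_card_eq_one', one_pow]
  have hPc : Nat.card P ∣ p ^ k := by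
    obtain ⟨j, hj⟩ := IsPGroup.iff_card.mp hPp
    refine Nat.Coprime.dvd_of_dvd_mul_right (n := m) ?_ (hc ▸ Subgroup.card_subgroup_dvd_card P)
    rw [hj]
    exact Nat.Coprime.pow_left _ hcop
  have hpe : ∀ x : A, x ^ p = 1 → x ^ e = x := fun x hx => by
    conv_rhs => rw [← pow_one x]
    exact pow_eq_pow_iff_modEq.mpr
      (he1.of_dvd ((orderOf_dvd_of_pow_eq_one hx).trans (dvd_pow_self p hk)))
  have hQc : Nat.card Q ∣ m := by
    refine Nat.Coprime.dvd_of_dvd_mul_left (m := p ^ k) ?_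
      (hc ▸ Subgroup.card_subgroup_dvd_card Q)
    refine Nat.Coprime.pow_right _ (Nat.Coprime.symm ?_)
    rw [Nat.Prime.coprime_iff_not_dvd hp.out]
    intro hd
    obtain ⟨⟨x, hxQ⟩, hx⟩ := exists_prime_orderOf_dvd_card' p hd
    have hx' : orderOf x = p := by rw [← hx, Subgroup.orderOf_mk]
    have h1 : x = 1 := by
      rw [← hpe x (hx' ▸ pow_orderOf_eq_one x)]
      exact hxQ
    rw [h1, orderOf_one] at hx'
    exact hp.out.ne_one hx'.symm
  have hPcirc : ∀ x : A, x ∈ P → (S.toC x) ^ e = (S.toC x) := fun x hx => by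
    have := S.orderOf_circ_dvd P hPl x hx
    conv_rhs => rw [← pow_one (S.toC x)]
    exact pow_eq_pow_iff_modEq.mpr (he1.of_dvd (this.trans hPc))
  have hQcirc : ∀ x : A, x ∈ Q → (S.toC x) ^ e = 1 := fun x hx =>
    orderOf_dvd_iff_pow_eq_one.mp ((S.orderOf_circ_dvd Q hQl x hx).trans (hQc.trans he0))
  have hcc : ∀ x y : A, x ∈ P → y ∈ Q → S.circ x y = S.circ y x := fun x y hx hy =>
    skb_comm hpow' (hPcirc x hx) (hQcirc y hy)
  have hlamQP : ∀ x y : A, x ∈ P → y ∈ Q → S.lam y x = x := fun x y hx hy => by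
    have h := congrArg (· ^ e) (hcc x y hx hy)
    simp only [circ_eq, hpow] at h
    rw [(hPm x).mp hx, (hQm y).mp hy, (hQm _).mp (hQl x y hy), (hPm _).mp (hPl y x hx), mul_one,
      one_mul] at h
    exact h.symm
  have hlamPQ : ∀ x y : A, x ∈ P → y ∈ Q → S.lam x y = y := fun x y hx hy => by
    have h := hcc x y hx hy
    rw [circ_eq, circ_eq, hlamQP x y hx hy, ← skb_comm hpow hx hy] at h
    exact mul_left_cancel h
  have hPQ : ∀ x y : A, x ∈ P → y ∈ Q → S.circ x y = x * y := fun x y hx hy => by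
    rw [circ_eq, hlamPQ x y hx hy]
  have hκ : ∀ a : A, (a ^ e)⁻¹ * a ∈ Q := fun a => by
    rw [hQm, hpow, inv_pow, hid]; simp
  have hdec : ∀ a : A, a = S.circ (a ^ e) ((a ^ e)⁻¹ * a) := fun a => by
    rw [hPQ _ _ (hid a) (hκ a)]; simp
  have hρ : ∀ a : A, (S.toC a) ^ e = (S.toC (a ^ e)) := fun a => by
    have h1 : (S.toC a) =
      (S.toC (a ^ e)) * (S.toC ((a ^ e)⁻¹ * a)) := hdec a
    conv_lhs => rw [h1]
    rw [hpow', hPcirc _ (hid a), hQcirc _ (hκ a), mul_one]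
  have hκ' : ∀ a : A, ((S.toC (a ^ e))⁻¹ * (S.toC a) : S.Circ) =
      (S.toC ((a ^ e)⁻¹ * a)) := fun a => by
    rw [inv_mul_eq_iff_eq_mul]
    exact hdec a
  have hP3 : 3 ≤ Nat.card P := by
    obtain ⟨x, hx⟩ := exists_prime_orderOf_dvd_card' p hpd
    have hxP : x ∈ P := hpe x (hx ▸ pow_orderOf_eq_one x)
    have := Subgroup.orderOf_dvd_natCard P hxP
    rw [hx] at this
    exact hp3.trans (Nat.le_of_dvd Nat.card_pos this)
  obtain ⟨f, ⟨⟨finj, -⟩, fmul, fcirc⟩, fne⟩ := (S.sub P hPl).pgroup_case hPp hP3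
  classical
  let g : A → A := fun a => if h : a ∈ P then (f ⟨a, h⟩ : A) else a
  have hg : ∀ a (h : a ∈ P), g a = f ⟨a, h⟩ := fun a h => dif_pos h
  have hgP : ∀ a, a ∈ P → g a ∈ P := fun a h => by rw [hg a h]; exact (f ⟨a, h⟩).2
  let F : A → A := fun a => g (a ^ e) * ((a ^ e)⁻¹ * a)
  have hF' : ∀ a, F a = S.circ (g (a ^ e)) ((a ^ e)⁻¹ * a) := fun a =>
    (hPQ _ _ (hgP _ (hid a)) (hκ a)).symm
  have hFe : ∀ a, (F a) ^ e = g (a ^ e) := fun a => by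
    show (g (a ^ e) * ((a ^ e)⁻¹ * a)) ^ e = _
    rw [hpow, (hQm _).mp (hκ a), mul_one]
    exact hgP _ (hid a)
  have hinj : Function.Injective F := by
    intro a b hab
    have h1 : g (a ^ e) = g (b ^ e) := by rw [← hFe, ← hFe, hab]
    have h2 : a ^ e = b ^ e := by
      rw [hg _ (hid a), hg _ (hid b)] at h1
      exact congrArg Subtype.val (finj (Subtype.ext h1))
    have h3 : g (a ^ e) * ((a ^ e)⁻¹ * a) = g (b ^ e) * ((b ^ e)⁻¹ * b) := hab
    rw [h2] at h3
    exact mul_left_cancel (mul_left_cancel h3)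
  refine ⟨F, ⟨Finite.injective_iff_bijective.mp hinj, ?_, ?_⟩, ?_⟩
  · refine skb_glue hpow hid g hgP (fun a b ha hb => ?_)
    rw [hg a ha, hg b hb, hg _ (P.mul_mem ha hb)]
    exact congrArg Subtype.val (fmul ⟨a, ha⟩ ⟨b, hb⟩)
  · have hP' : ∀ a : A, (S.toC a) ^ e = S.toC a → a ∈ P := fun a ha => (hρ a).symm.trans ha
    have hgm : ∀ a b : A, a ∈ P → b ∈ P → g (S.circ a b) = S.circ (g a) (g b) :=
      fun a b ha hb => by
        have hab : S.circ a b ∈ P := by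
          rw [circ_eq]; exact mul_mem ha (hPl _ _ hb)
        rw [hg _ ha, hg _ hb, hg _ hab]
        exact congrArg Subtype.val (fcirc ⟨a, ha⟩ ⟨b, hb⟩)
    have key := skb_glue (G := S.Circ) hpow' hid' (fun a => S.toC (g a))
      (fun a ha => hPcirc _ (hgP _ (hP' a ha)))
      (fun a b ha hb => hgm a b (hP' a ha) (hP' b hb))
    have hFc : ∀ a : A, S.toC (g ((S.toC a) ^ e)) * (((S.toC a) ^ e)⁻¹ * S.toC a) =
        S.toC (F a) := fun a => by
      rw [hρ a, hκ' a]
      exact (hF' a).symm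
    intro a b
    exact (hFc (S.circ a b)).symm.trans ((key a b).trans (congrArg₂ (· * ·) (hFc a) (hFc b)))
  · intro h
    apply fne
    funext x
    apply Subtype.ext
    have h1 : g ((x : A) ^ e) * (((x : A) ^ e)⁻¹ * x) = x := congrFun h x
    rw [(hPm _).mp x.2, inv_mul_cancel, mul_one, hg _ x.2] at h1
    exact h1

end SkewBraceStruct

/-- A finite skew brace of order at least `3` whose additive and multiplicative groups
are both nilpotent has a non-trivial automorphism group. -/
theorem nilpotent_aut_nontrivial {A : Type*} [Group A] [Finite A] (S : SkewBraceStruct A)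
    (hcard : 3 ≤ Nat.card A)
    (hnil_dot : Group.IsNilpotent A)
    (hnil_circ : @Group.IsNilpotent A S.circGroup) :
    ∃ f : A → A, S.IsAut f ∧ f ≠ id := by
  obtain ⟨k, hk⟩ | ⟨p, hp, hpd, hodd⟩ := (Nat.card A).eq_two_pow_or_exists_odd_prime_and_dvd
  · have : Fact (Nat.Prime 2) := ⟨Nat.prime_two⟩
    exact S.pgroup_case (IsPGroup.of_card hk) hcard
  · have : Fact p.Prime := ⟨hp⟩
    have h2 := hp.two_le
    obtain ⟨t, ht⟩ := hodd
    exact S.reduce hnil_dot hnil_circ hpd (by omega)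
end

section
/- For every odd prime p, there exists a skew brace A = (A,·,∘) with |A| = 2p³ whose automorphism group is trivial; that is, the only bijection A → A that is an automorphism of both (A,·) and (A,∘) is the identity map. -/
/-- Underlying set: Heisenberg group of order `p ^ 3`, extended by a sign. -/
@[ext] structure HeisT (p : ℕ) where
  a : ZMod p
  b : ZMod p
  c : ZMod p
  s : ℤˣ

namespace HeisT

/-- The sign as an element of `ZMod p`. -/
def sg {p : ℕ} (s : ℤˣ) : ZMod p := ((s : ℤ) : ZMod p)

lemma sg_one {p : ℕ} : (sg 1 : ZMod p) = 1 := by simp [sg]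
lemma sg_neg {p : ℕ} : (sg (-1) : ZMod p) = -1 := by simp [sg]
lemma sg_mul {p : ℕ} (s t : ℤˣ) : (sg (s * t) : ZMod p) = sg s * sg t := by simp [sg]
lemma sg_sq {p : ℕ} (s : ℤˣ) : (sg s : ZMod p) * sg s = 1 := by
  rw [← sg_mul]; simp [sg]

instance grp (p : ℕ) : Group (HeisT p) where
  mul x y := ⟨x.a + y.a, x.b + sg x.s * y.b, x.c + sg x.s * y.c + x.a * sg x.s * y.b, x.s * y.s⟩
  one := ⟨0, 0, 0, 1⟩
  inv x := ⟨-x.a, -(sg x.s * x.b), sg x.s * (x.a * x.b - x.c), x.s⟩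
  mul_assoc x y z := by
    apply HeisT.ext
    · exact add_assoc _ _ _
    · change x.b + sg x.s * y.b + sg (x.s * y.s) * z.b = x.b + sg x.s * (y.b + sg y.s * z.b)
      rw [sg_mul]; ring
    · change x.c + sg x.s * y.c + x.a * sg x.s * y.b + sg (x.s * y.s) * z.c
        + (x.a + y.a) * sg (x.s * y.s) * z.b
        = x.c + sg x.s * (y.c + sg y.s * z.c + y.a * sg y.s * z.b)
        + x.a * sg x.s * (y.b + sg y.s * z.b)
      rw [sg_mul]; ring
    · exact mul_assoc _ _ _
  one_mul x := by
    apply HeisT.ext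
    · exact zero_add _
    · change 0 + sg 1 * x.b = x.b
      rw [sg_one]; ring
    · change 0 + sg 1 * x.c + 0 * sg 1 * x.b = x.c
      rw [sg_one]; ring
    · exact one_mul _
  mul_one x := by
    apply HeisT.ext
    · exact add_zero _
    · change x.b + sg x.s * 0 = x.b
      ring
    · change x.c + sg x.s * 0 + x.a * sg x.s * 0 = x.c
      ring
    · exact mul_one _
  inv_mul_cancel x := by
    apply HeisT.ext
    · exact neg_add_cancel _
    · change -(sg x.s * x.b) + sg x.s * x.b = 0
      ring
    · change sg x.s * (x.a * x.b - x.c) + sg x.s * x.c + -x.a * sg x.s * x.b = 0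
      ring
    · change x.s * x.s = 1
      exact Int.units_mul_self _

variable {p : ℕ}

@[simp] lemma mul_a (x y : HeisT p) : (x * y).a = x.a + y.a := rfl
@[simp] lemma mul_b (x y : HeisT p) : (x * y).b = x.b + sg x.s * y.b := rfl
@[simp] lemma mul_c (x y : HeisT p) :
    (x * y).c = x.c + sg x.s * y.c + x.a * sg x.s * y.b := rfl
@[simp] lemma mul_s (x y : HeisT p) : (x * y).s = x.s * y.s := rfl
@[simp] lemma one_a : (1 : HeisT p).a = 0 := rfl
@[simp] lemma one_b : (1 : HeisT p).b = 0 := rfl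
@[simp] lemma one_c : (1 : HeisT p).c = 0 := rfl
@[simp] lemma one_s : (1 : HeisT p).s = 1 := rfl
@[simp] lemma inv_a (x : HeisT p) : (x⁻¹).a = -x.a := rfl
@[simp] lemma inv_b (x : HeisT p) : (x⁻¹).b = -(sg x.s * x.b) := rfl
@[simp] lemma inv_c (x : HeisT p) : (x⁻¹).c = sg x.s * (x.a * x.b - x.c) := rfl
@[simp] lemma inv_s (x : HeisT p) : (x⁻¹).s = x.s := rfl

/-- The second operation. -/
def ci (x y : HeisT p) : HeisT p :=
  ⟨x.a + sg x.s * y.a, y.b + sg y.s * x.b,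
    sg x.s * y.c + sg x.s * x.b + (x.a - sg x.s * x.b) * y.b + sg y.s * (x.c - sg x.s * x.b)
      + sg x.s * sg y.s * y.a * x.b, x.s * y.s⟩

/-- The inverse for the second operation. -/
def cinv (x : HeisT p) : HeisT p :=
  ⟨-(sg x.s * x.a), -(sg x.s * x.b),
    -x.b + (x.a - sg x.s * x.b) * x.b - x.c + sg x.s * x.b + x.a * x.b, x.s⟩

/-- The skew brace. -/
def brc (p : ℕ) : SkewBraceStruct (HeisT p) where
  circ := ci
  circInv := cinv
  circ_assoc x y z := by
    obtain ⟨a, b, c, s⟩ := x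
    obtain ⟨a', b', c', s'⟩ := y
    obtain ⟨a'', b'', c'', s''⟩ := z
    rcases Int.units_eq_one_or s with rfl | rfl <;>
    rcases Int.units_eq_one_or s' with rfl | rfl <;>
    rcases Int.units_eq_one_or s'' with rfl | rfl <;>
    ext <;> simp [ci, sg_one, sg_neg] <;> ring
  one_circ x := by
    ext <;> simp [ci, sg_one]
  circ_one x := by
    ext <;> simp [ci, sg_one]
  circInv_circ x := by
    obtain ⟨a, b, c, s⟩ := x
    rcases Int.units_eq_one_or s with rfl | rfl <;>
    ext <;> simp [ci, cinv, sg_one, sg_neg] <;> ring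
  brace x y z := by
    obtain ⟨a, b, c, s⟩ := x
    obtain ⟨a', b', c', s'⟩ := y
    obtain ⟨a'', b'', c'', s''⟩ := z
    rcases Int.units_eq_one_or s with rfl | rfl <;>
    rcases Int.units_eq_one_or s' with rfl | rfl <;>
    rcases Int.units_eq_one_or s'' with rfl | rfl <;>
    ext <;> simp [ci, sg_one, sg_neg] <;> ring

/-- The underlying set as a product. -/
def eqv (p : ℕ) : HeisT p ≃ (ZMod p × ZMod p × ZMod p) × ℤˣ where
  toFun x := ((x.a, x.b, x.c), x.s)
  invFun y := ⟨y.1.1, y.1.2.1, y.1.2.2, y.2⟩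
  left_inv _ := rfl
  right_inv _ := rfl

lemma card (p : ℕ) : Nat.card (HeisT p) = 2 * p ^ 3 := by
  rw [Nat.card_congr (eqv p)]
  simp only [Nat.card_prod, Nat.card_zmod]
  have : Nat.card ℤˣ = 2 := by simp
  rw [this]; ring

lemma pow_x (n : ℕ) : (⟨1, 0, 0, 1⟩ : HeisT p) ^ n = ⟨n, 0, 0, 1⟩ := by
  induction n with
  | zero => ext <;> simp
  | succ n ih => rw [pow_succ, ih]; ext <;> simp
lemma pow_y (n : ℕ) : (⟨0, 1, 0, 1⟩ : HeisT p) ^ n = ⟨0, n, 0, 1⟩ := by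
  induction n with
  | zero => ext <;> simp
  | succ n ih => rw [pow_succ, ih]; ext <;> simp [sg_one]
lemma pow_z (n : ℕ) : (⟨0, 0, 1, 1⟩ : HeisT p) ^ n = ⟨0, 0, n, 1⟩ := by
  induction n with
  | zero => ext <;> simp
  | succ n ih => rw [pow_succ, ih]; ext <;> simp [sg_one]

lemma trivial_aut (hp : p.Prime) (hodd : Odd p) (f : HeisT p → HeisT p)
    (hf : (brc p).IsAut f) : f = id := by
  have : Fact p.Prime := ⟨hp⟩
  have h2 : (2 : ZMod p) ≠ 0 := by
    intro h
    have h' : ((2 : ℕ) : ZMod p) = 0 := by exact_mod_cast h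
    rw [ZMod.natCast_eq_zero_iff] at h'
    have := (Nat.prime_dvd_prime_iff_eq hp Nat.prime_two).1 h'
    subst this
    exact absurd hodd (by decide)
  obtain ⟨hbij, hmul, hcirc⟩ := hf
  change ∀ a b, f (ci a b) = ci (f a) (f b) at hcirc
  let F : HeisT p →* HeisT p := MonoidHom.mk' f hmul
  have hone : f 1 = 1 := F.map_one
  have hsq : ∀ g h : HeisT p, g = h * h → (f g).s = 1 := by
    rintro g h rfl
    rw [hmul]; simp
  have h22 : (2 : ZMod p)⁻¹ + 2⁻¹ = 1 := by field_simp; norm_num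
  have sx := hsq ⟨1, 0, 0, 1⟩ ⟨2⁻¹, 0, 0, 1⟩ (by ext <;> simp [h22])
  have sy := hsq ⟨0, 1, 0, 1⟩ ⟨0, 2⁻¹, 0, 1⟩ (by ext <;> simp [h22, sg_one])
  have sz := hsq ⟨0, 0, 1, 1⟩ ⟨0, 0, 2⁻¹, 1⟩ (by ext <;> simp [h22, sg_one])
  -- relations
  have rtt : f ⟨0, 0, 0, -1⟩ * f ⟨0, 0, 0, -1⟩ = 1 := by
    rw [← hmul, ← hone]; congr 1; ext <;> simp
  have rtx : f ⟨0, 0, 0, -1⟩ * f ⟨1, 0, 0, 1⟩ = f ⟨1, 0, 0, 1⟩ * f ⟨0, 0, 0, -1⟩ := by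
    rw [← hmul, ← hmul]; congr 1; ext <;> simp
  have rty : f ⟨0, 1, 0, 1⟩ * (f ⟨0, 0, 0, -1⟩ * f ⟨0, 1, 0, 1⟩) = f ⟨0, 0, 0, -1⟩ := by
    rw [← hmul, ← hmul]; congr 1; ext <;> simp [sg_one, sg_neg]
  have rxy : f ⟨0, 1, 0, 1⟩ * (f ⟨1, 0, 0, 1⟩ * f ⟨0, 0, 1, 1⟩)
      = f ⟨1, 0, 0, 1⟩ * f ⟨0, 1, 0, 1⟩ := by
    rw [← hmul, ← hmul, ← hmul]; congr 1; ext <;> simp [sg_one]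
  have cyy : ci (f ⟨0, 1, 0, 1⟩) (f ⟨0, 1, 0, 1⟩) * f ⟨0, 0, 1, 1⟩
      = f ⟨0, 1, 0, 1⟩ * f ⟨0, 1, 0, 1⟩ := by
    rw [← hcirc, ← hmul, ← hmul]; congr 1; ext <;> simp [ci, sg_one]
  have cyt : ci (f ⟨0, 1, 0, 1⟩) (f ⟨0, 0, 0, -1⟩)
      = f ⟨0, 0, 1, 1⟩ * (f ⟨0, 0, 1, 1⟩ * (f ⟨0, 0, 0, -1⟩ * f ⟨0, 1, 0, 1⟩)) := by
    rw [← hcirc, ← hmul, ← hmul, ← hmul]; congr 1; ext <;> simp [ci, sg_one, sg_neg]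
  have cty : ci (f ⟨0, 0, 0, -1⟩) (f ⟨0, 1, 0, 1⟩) = f ⟨0, 1, 0, 1⟩ * f ⟨0, 0, 0, -1⟩ := by
    rw [← hcirc, ← hmul]; congr 1; ext <;> simp [ci, sg_one, sg_neg]
  have ctt : ci (f ⟨0, 0, 0, -1⟩) (f ⟨0, 0, 0, -1⟩) = 1 := by
    rw [← hcirc, ← hone]; congr 1; ext <;> simp [ci]
  have cxt : ci (f ⟨1, 0, 0, 1⟩) (f ⟨0, 0, 0, -1⟩) = f ⟨1, 0, 0, 1⟩ * f ⟨0, 0, 0, -1⟩ := by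
    rw [← hcirc, ← hmul]; congr 1; ext <;> simp [ci, sg_one, sg_neg]
  have nt : f ⟨0, 0, 0, -1⟩ ≠ 1 := by
    intro h
    rw [← hone] at h
    have := congrArg HeisT.s (hbij.1 h)
    simp at this
  have nz : f ⟨0, 0, 1, 1⟩ ≠ 1 := by
    intro h
    rw [← hone] at h
    have := congrArg HeisT.c (hbij.1 h)
    simp at this
  have key : f ⟨1, 0, 0, 1⟩ = ⟨1, 0, 0, 1⟩ ∧ f ⟨0, 1, 0, 1⟩ = ⟨0, 1, 0, 1⟩ ∧
      f ⟨0, 0, 1, 1⟩ = ⟨0, 0, 1, 1⟩ ∧ f ⟨0, 0, 0, -1⟩ = ⟨0, 0, 0, -1⟩ := by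
    generalize f ⟨1, 0, 0, 1⟩ = X at *
    generalize f ⟨0, 1, 0, 1⟩ = Y at *
    generalize f ⟨0, 0, 1, 1⟩ = Z at *
    generalize f ⟨0, 0, 0, -1⟩ = T at *
    obtain ⟨x1, x2, x3, xs⟩ := X
    obtain ⟨y1, y2, y3, ys⟩ := Y
    obtain ⟨z1, z2, z3, zs⟩ := Z
    obtain ⟨t1, t2, t3, ts⟩ := T
    simp only at sx sy sz
    subst sx sy sz
    have dbl : ∀ r : ZMod p, 2 * r = 0 → r = 0 := fun r h =>
      (mul_eq_zero.1 h).resolve_left h2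
    rcases Int.units_eq_one_or ts with rfl | rfl
    · exfalso
      apply nt
      simp [HeisT.ext_iff, sg_one] at rtt
      obtain ⟨e1, e2, e3⟩ := rtt
      have e1' : t1 = 0 := dbl _ (by linear_combination e1)
      subst e1'
      have e2' : t2 = 0 := dbl _ (by linear_combination e2)
      have e3' : t3 = 0 := dbl _ (by linear_combination e3)
      ext <;> simp [e2', e3']
    · simp only [HeisT.ext_iff, ci, mul_a, mul_b, mul_c, mul_s, one_a, one_b, one_c, one_s,
        sg_one, sg_neg] at rtt rtx rty rxy cyy cyt cty ctt cxt
      obtain ⟨a1, a2, a3, -⟩ := rtt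
      obtain ⟨b1, b2, b3, -⟩ := rtx
      obtain ⟨c1, c2, c3, -⟩ := rty
      obtain ⟨d1, d2, d3, -⟩ := rxy
      obtain ⟨e1, e2, e3, -⟩ := cyy
      obtain ⟨f1, f2, f3, -⟩ := cyt
      obtain ⟨g1, g2, g3, -⟩ := cty
      obtain ⟨i1, i2, i3, -⟩ := ctt
      obtain ⟨j1, j2, j3, -⟩ := cxt
      have t10 : t1 = 0 := dbl _ (by linear_combination a1)
      subst t10
      have x20 : x2 = 0 := dbl _ (by linear_combination -b2)
      subst x20
      have y10 : y1 = 0 := dbl _ (by linear_combination c1)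
      subst y10
      have z10 : z1 = 0 := by linear_combination d1
      subst z10
      have z20 : z2 = 0 := by linear_combination d2
      subst z20
      have z3e : z3 = x1 * y2 := by linear_combination d3
      subst z3e
      have hxy : x1 * y2 ≠ 0 := by
        intro h
        apply nz
        ext <;> simp [h]
      have hx1 : x1 ≠ 0 := left_ne_zero_of_mul hxy
      have hy2 : y2 ≠ 0 := right_ne_zero_of_mul hxy
      have x30 : x3 = 0 := dbl _ (by linear_combination -j3)
      subst x30
      have t20 : t2 = 0 := (mul_eq_zero.1 (by linear_combination -b3 : x1 * t2 = 0)).resolve_left hx1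
      subst t20
      have t30 : t3 = 0 := dbl _ (by linear_combination -i3)
      subst t30
      have y30 : y3 = 0 := dbl _ (by linear_combination -g3)
      subst y30
      have u1 : x1 = 1 := by
        have : y2 * (x1 - 1) = 0 := dbl _ (by linear_combination -f3)
        have := (mul_eq_zero.1 this).resolve_left hy2
        linear_combination this
      subst u1
      have v1 : y2 = 1 := by
        have : y2 * (1 - y2) = 0 := by simp only [sg_mul, sg_one] at e3; linear_combination e3
        have := (mul_eq_zero.1 this).resolve_left hy2
        linear_combination -this
      subst v1
      simp
  obtain ⟨kx, ky, kz, kt⟩ := key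
  have fx : ∀ a : ZMod p, f ⟨a, 0, 0, 1⟩ = ⟨a, 0, 0, 1⟩ := by
    intro a
    have := F.map_pow ⟨1, 0, 0, 1⟩ a.val
    change f _ = f _ ^ _ at this
    rw [kx, pow_x, ZMod.natCast_zmod_val] at this
    exact this
  have fy : ∀ a : ZMod p, f ⟨0, a, 0, 1⟩ = ⟨0, a, 0, 1⟩ := by
    intro a
    have := F.map_pow ⟨0, 1, 0, 1⟩ a.val
    change f _ = f _ ^ _ at this
    rw [ky, pow_y, ZMod.natCast_zmod_val] at this
    exact this
  have fz : ∀ a : ZMod p, f ⟨0, 0, a, 1⟩ = ⟨0, 0, a, 1⟩ := by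
    intro a
    have := F.map_pow ⟨0, 0, 1, 1⟩ a.val
    change f _ = f _ ^ _ at this
    rw [kz, pow_z, ZMod.natCast_zmod_val] at this
    exact this
  have fs : ∀ s : ℤˣ, f ⟨0, 0, 0, s⟩ = ⟨0, 0, 0, s⟩ := by
    intro s
    rcases Int.units_eq_one_or s with rfl | rfl
    · exact hone
    · exact kt
  funext g
  obtain ⟨a, b, c, s⟩ := g
  have : (⟨a, b, c, s⟩ : HeisT p) =
      ⟨0, b, 0, 1⟩ * (⟨a, 0, 0, 1⟩ * (⟨0, 0, c, 1⟩ * ⟨0, 0, 0, s⟩)) := by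
    ext <;> simp [sg_one]
  rw [this, hmul, hmul, hmul, fx, fy, fz, fs]
  rfl

end HeisT

/-- For every odd prime `p`, there exists a skew brace of order `2 * p ^ 3` whose
automorphism group is trivial. -/
theorem exists_skewBrace_order_two_p_cubed_trivial_aut (p : ℕ) (hp : p.Prime) (hodd : Odd p) :
    ∃ (A : Type) (instA : Group A) (S : @SkewBraceStruct A instA),
      Nat.card A = 2 * p ^ 3 ∧
      ∀ f : A → A, @SkewBraceStruct.IsAut A instA S f → f = id :=
  ⟨HeisT p, HeisT.grp p, HeisT.brc p, HeisT.card p,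
    fun f hf => HeisT.trivial_aut hp hodd f hf⟩
end
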